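/- Critical limit law: at μ₁ = log 6, for all reals 0 ≤ a < b, P_{N, log 6}({m : a·√N ≤ m ≤ b·√N}) converges as N → ∞ along even integers to (∫_a^b √x · exp(−2x²/3) dx) / (∫_0^∞ √x · exp(−2x²/3) dx); i.e. m(N)/√N converges in distribution to the law on (0,∞) with density proportional to √x · exp(−2x²/3). -/

import Mathlib

open Filter Real MeasureTheory

/-- Number of rooted quasitriangulations of a sphere with a hole with `N` triangles and
`m` boundary edges (Goulden–Jackson), with `j = (N - m)/2`. -/
noncomputable def C0 (N m : ℕ) : ℝ :=
  (2 : ℝ) ^ ((N - m) / 2 + 2) * (Nat.factorial (2 * m + 3 * ((N - m) / 2) - 1) : ℝ) *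
    (Nat.factorial (2 * m - 3) : ℝ) /
    ((Nat.factorial ((N - m) / 2 + 1) : ℝ) * (Nat.factorial (2 * m + 2 * ((N - m) / 2)) : ℝ) *
      ((Nat.factorial (m - 2) : ℝ)) ^ 2)

/-- The filter "N → ∞ along even integers". -/
def evenAtTop : Filter ℕ := Filter.atTop ⊓ Filter.principal {N | Even N}
/-- Weight of boundary length m: w_{μ₁}(N,m) = exp(-μ₁ m/2) C₀(N,m). -/
noncomputable def w (μ₁ : ℝ) (N m : ℕ) : ℝ := Real.exp (-μ₁ * m / 2) * C0 N m

/-- Normalizing constant Θ_N(μ₁) = Σ_{m even, 2 ≤ m ≤ N} w_{μ₁}(N,m). -/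
noncomputable def Θ (μ₁ : ℝ) (N : ℕ) : ℝ :=
  ∑ m ∈ (Finset.range (N + 1)).filter (fun m => Even m ∧ 2 ≤ m), w μ₁ N m

/-- Boundary-length distribution P_{N,μ₁}(m) = w_{μ₁}(N,m)/Θ_N(μ₁). -/
noncomputable def P (μ₁ : ℝ) (N m : ℕ) : ℝ := w μ₁ N m / Θ μ₁ N

open scoped Classical

/-!
Write `N = 2n` and `m = 2k`. The critical weight is a constant depending on `n` times
`boundaryFactor k * bulkFactor n k`. Stirling's formula gives `boundaryFactor k ~ c √k`. The bulk
factor is a quotient of products `∏_{i < k} (1 + (α i + β) / n)`, each of which tends to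
`exp (α L / 2)` when `k² / n → L`; with `α = 1/3` and `-1` in the numerator and `1`, `1` in the
denominator, this makes the bulk factor behave like `exp (-4k² / (3n)) = exp (-2m² / (3N))`. The
value `6` is critical because the remaining geometric factors in `k` then cancel:
`16 · 3 / (2 · 4 · 6) = 1`. A Gaussian bound on the bulk factor, uniform in `n`, lets dominated
convergence turn the sum over `k`, viewed as the integral of a step function, into the integral
of the limit.
-/

open Set Topology Asymptotics

section StepFunctions

variable {E : Type*} [NormedAddCommGroup E] [NormedSpace ℝ E] [CompleteSpace E]

lemma integral_Ioi_natCeil {G : ℕ → E}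
    (hG : IntegrableOn (fun t : ℝ => G ⌈t⌉₊) (Ioi 0)) :
    ∫ t in Ioi (0 : ℝ), G ⌈t⌉₊ = ∑' k, G (k + 1) := by
  have hmono : Monotone (fun k : ℕ => (k : ℝ)) := Nat.mono_cast
  have hcover : ⋃ k : ℕ, Ioc (k : ℝ) ((Order.succ k : ℕ) : ℝ) = Ioi 0 := by
    simpa using iUnion_Ioc_map_succ_eq_Ioi (fun k => hmono (Nat.zero_le k))
      (not_bddAbove_of_tendsto_atTop tendsto_natCast_atTop_atTop)
  have hpiece : ∀ k : ℕ, ∫ t in Ioc (k : ℝ) ((Order.succ k : ℕ) : ℝ), G ⌈t⌉₊ = G (k + 1) := by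
    intro k
    have hceil : EqOn (fun t : ℝ => G ⌈t⌉₊) (fun _ => G (k + 1))
        (Ioc (k : ℝ) ((Order.succ k : ℕ) : ℝ)) := fun t ht => by
      have : ⌈t⌉₊ = k + 1 := (Nat.ceil_eq_iff k.succ_ne_zero).2 ⟨by simpa using ht.1, ht.2⟩
      simp only [this]
    rw [setIntegral_congr_fun measurableSet_Ioc hceil]
    simp
  rw [← hcover] at hG ⊢
  rw [integral_iUnion (fun _ => measurableSet_Ioc) hmono.pairwise_disjoint_on_Ioc_succ hG]
  exact tsum_congr hpiece

theorem tendsto_inv_smul_tsum_of_dominated {ι : Type*} {l : Filter ι}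
    [l.IsCountablyGenerated] {s : ι → ℝ} {F : ι → ℕ → E} {f : ℝ → E} {bound : ℝ → ℝ}
    (hs : ∀ᶠ n in l, 0 < s n) (hbound : IntegrableOn bound (Ioi 0))
    (hF : ∀ᶠ n in l, ∀ x > 0, ‖F n ⌈s n * x⌉₊‖ ≤ bound x)
    (hlim : ∀ᵐ x ∂volume.restrict (Ioi 0), Tendsto (fun n => F n ⌈s n * x⌉₊) l (𝓝 (f x))) :
    Tendsto (fun n => (s n)⁻¹ • ∑' k, F n (k + 1)) l (𝓝 (∫ x in Ioi 0, f x)) := by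
  have hmeas : ∀ n, AEStronglyMeasurable (fun x => F n ⌈s n * x⌉₊) (volume.restrict (Ioi 0)) :=
    fun n => (StronglyMeasurable.of_discrete (f := F n)).comp_measurable
      (Nat.measurable_ceil.comp (measurable_const_mul (s n))) |>.aestronglyMeasurable
  have hdom : ∀ᶠ n in l, ∀ᵐ x ∂volume.restrict (Ioi 0), ‖F n ⌈s n * x⌉₊‖ ≤ bound x :=
    hF.mono fun n hn => ae_restrict_of_forall_mem measurableSet_Ioi hn
  refine (tendsto_integral_filter_of_dominated_convergence bound (.of_forall hmeas) hdom hbound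
    hlim).congr' ?_
  filter_upwards [hs, hdom] with n hsn hdn
  have hint : IntegrableOn (fun x => F n ⌈s n * x⌉₊) (Ioi 0) := hbound.mono' (hmeas n) hdn
  have hstep : IntegrableOn (fun t : ℝ => F n ⌈t⌉₊) (Ioi 0) := by
    simpa only [mul_zero] using
      (integrableOn_Ioi_comp_mul_left_iff (fun t : ℝ => F n ⌈t⌉₊) 0 hsn).1 hint
  rw [integral_comp_mul_left_Ioi (fun t : ℝ => F n ⌈t⌉₊) 0 hsn, mul_zero,
    integral_Ioi_natCeil hstep]

end StepFunctions

section Products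

lemma abs_log_one_add_sub_self_le {x : ℝ} (hx : |x| ≤ 1 / 2) :
    |log (1 + x) - x| ≤ 2 * x ^ 2 := by
  have h := abs_log_sub_add_sum_range_le (x := -x) (by rw [abs_neg]; linarith) 1
  simp only [Finset.range_one, Finset.sum_singleton, zero_add, pow_one, CharP.cast_eq_zero,
    div_one, sub_neg_eq_add, abs_neg, one_add_one_eq_two, sq_abs] at h
  calc |log (1 + x) - x| = |-x + log (1 + x)| := by rw [neg_add_eq_sub]
    _ ≤ x ^ 2 / (1 - |x|) := h
    _ ≤ 2 * x ^ 2 := by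
      rw [div_le_iff₀ (by linarith)]
      nlinarith [sq_nonneg x]

theorem tendsto_prod_one_add {ι κ : Type*} {l : Filter ι} {T : ι → Finset κ} {z : ι → κ → ℝ}
    {L : ℝ} (hsum : Tendsto (fun n => ∑ i ∈ T n, z n i) l (𝓝 L))
    (hsq : Tendsto (fun n => ∑ i ∈ T n, z n i ^ 2) l (𝓝 0)) :
    Tendsto (fun n => ∏ i ∈ T n, (1 + z n i)) l (𝓝 (exp L)) := by
  have hsmall : ∀ᶠ n in l, ∀ i ∈ T n, |z n i| ≤ 1 / 2 := by
    filter_upwards [hsq.eventually_lt_const (show (0 : ℝ) < (1 / 2) ^ 2 by norm_num)]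
      with n hn i hi
    have hle : z n i ^ 2 ≤ ∑ i ∈ T n, z n i ^ 2 :=
      Finset.single_le_sum (f := fun i => z n i ^ 2) (fun _ _ => sq_nonneg _) hi
    exact abs_le_of_sq_le_sq (hle.trans hn.le) (by norm_num)
  have hdiff : Tendsto (fun n => ∑ i ∈ T n, (log (1 + z n i) - z n i)) l (𝓝 0) := by
    refine squeeze_zero_norm' ?_ (by simpa using hsq.const_mul 2)
    filter_upwards [hsmall] with n hn
    rw [Finset.mul_sum]
    exact (norm_sum_le _ _).trans
      (Finset.sum_le_sum fun i hi => abs_log_one_add_sub_self_le (hn i hi))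
  have hlog : Tendsto (fun n => ∑ i ∈ T n, log (1 + z n i)) l (𝓝 L) := by
    simpa [Finset.sum_sub_distrib] using hdiff.add hsum
  refine ((continuous_exp.tendsto L).comp hlog).congr' ?_
  filter_upwards [hsmall] with n hn
  rw [Function.comp_apply, exp_sum]
  exact Finset.prod_congr rfl fun i hi => exp_log (by linarith [(abs_le.1 (hn i hi)).1])

/-- The product `∏_{i < k} (1 + (α i + β) / t)`, a rescaled Pochhammer symbol. The falling and
rising factorials in the weights all have this form, with `t = n = N / 2`. -/
noncomputable def affineProd (α β t : ℝ) (k : ℕ) : ℝ :=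
  ∏ i ∈ Finset.range k, (1 + (α * i + β) / t)

lemma affineProd_succ (α β t : ℝ) (k : ℕ) :
    affineProd α β t (k + 1) = affineProd α β t k * (1 + (α * k + β) / t) :=
  Finset.prod_range_succ _ _

lemma sum_range_affine (α β : ℝ) (k : ℕ) :
    ∑ i ∈ Finset.range k, (α * i + β) = α * (k * (k - 1) / 2) + β * k := by
  induction k with
  | zero => simp
  | succ k ih => rw [Finset.sum_range_succ, ih]; push_cast; ring

lemma sum_sq_affine_le (α β : ℝ) (k : ℕ) :
    ∑ i ∈ Finset.range k, (α * i + β) ^ 2 ≤ k * (|α| * k + |β|) ^ 2 := by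
  rw [← nsmul_eq_mul, ← Finset.card_range k, ← Finset.sum_const, Finset.card_range]
  refine Finset.sum_le_sum fun i hi => sq_le_sq.2 ?_
  have hik : (i : ℝ) ≤ k := by exact_mod_cast (Finset.mem_range.1 hi).le
  calc |α * i + β| ≤ |α| * i + |β| := by simpa [abs_mul] using abs_add_le (α * i) β
    _ ≤ |α| * k + |β| := by gcongr
    _ ≤ |(|α| * k + |β|)| := le_abs_self _

theorem tendsto_affineProd {ι : Type*} {l : Filter ι} {t : ι → ℝ} {k : ι → ℕ} {L : ℝ} (α β : ℝ)
    (ht : Tendsto t l atTop) (hk : Tendsto (fun n => (k n : ℝ) ^ 2 / t n) l (𝓝 L)) :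
    Tendsto (fun n => affineProd α β (t n) (k n)) l (𝓝 (exp (α * L / 2))) := by
  have hinv : Tendsto (fun n => (t n)⁻¹) l (𝓝 0) := ht.inv_tendsto_atTop
  have hkt : Tendsto (fun n => (k n : ℝ) / t n) l (𝓝 0) := by
    have hsqrt := (hk.mul hinv).sqrt
    rw [mul_zero, sqrt_zero] at hsqrt
    refine hsqrt.congr' ?_
    filter_upwards [ht.eventually_gt_atTop 0] with n hn
    rw [← sqrt_sq (div_nonneg (k n).cast_nonneg hn.le)]
    congr 1
    ring
  refine tendsto_prod_one_add ?_ ?_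
  · have h := ((hk.sub hkt).const_mul (α / 2)).add (hkt.const_mul β)
    rw [show α / 2 * (L - 0) + β * 0 = α * L / 2 by ring] at h
    refine h.congr fun n => ?_
    rw [← Finset.sum_div, sum_range_affine]
    ring
  · have h := hkt.mul (((hk.const_mul (|α| ^ 2)).add (hkt.const_mul (2 * |α| * |β|))).add
      (hinv.const_mul (|β| ^ 2)))
    rw [zero_mul] at h
    refine squeeze_zero (fun n => Finset.sum_nonneg fun _ _ => sq_nonneg _) (fun n => ?_) h
    simp only [div_pow, ← Finset.sum_div]
    calc _ ≤ (k n * (|α| * k n + |β|) ^ 2) / t n ^ 2 := by gcongr; exact sum_sq_affine_le α β (k n)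
      _ = _ := by ring

lemma affineProd_le_affineProd {α α' β β' t : ℝ} (hα : 0 ≤ α) (hβ : 0 ≤ β) (ht : 0 ≤ t)
    (hαα' : α ≤ α') (hββ' : β ≤ β') (k : ℕ) : affineProd α β t k ≤ affineProd α' β' t k :=
  Finset.prod_le_prod (fun _ _ => by positivity) fun _ _ => by gcongr

lemma one_le_affineProd {α β t : ℝ} (hα : 0 ≤ α) (hβ : 0 ≤ β) (ht : 0 ≤ t) (k : ℕ) :
    1 ≤ affineProd α β t k := by
  simpa [affineProd] using affineProd_le_affineProd le_rfl le_rfl ht hα hβ k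

lemma affineProd_pos {α β t : ℝ} (hα : 0 ≤ α) (hβ : 0 ≤ β) (ht : 0 ≤ t) (k : ℕ) :
    0 < affineProd α β t k :=
  zero_lt_one.trans_le (one_le_affineProd hα hβ ht k)

lemma affineProd_le_exp {α β t : ℝ} {k : ℕ} (h : ∀ i < k, 0 ≤ 1 + (α * i + β) / t) :
    affineProd α β t k ≤ exp ((α * (k * (k - 1) / 2) + β * k) / t) := by
  rw [← sum_range_affine, Finset.sum_div, exp_sum]
  refine Finset.prod_le_prod (fun i hi => h i (Finset.mem_range.1 hi)) fun i _ => ?_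
  rw [add_comm]
  exact add_one_le_exp _

end Products

section BoundaryFactor

lemma centralBinom_isEquivalent :
    (fun n : ℕ => (n.centralBinom : ℝ)) ~[atTop] fun n => 4 ^ n / √(π * n) := by
  have hst := Stirling.factorial_isEquivalent_stirling
  have hdouble : Tendsto (fun n : ℕ => 2 * n) atTop atTop := tendsto_id.const_mul_atTop' two_pos
  refine ((hst.comp_tendsto hdouble).div (hst.pow 2)).congr_left ?_ |>.congr_right ?_
  · refine .of_forall fun n => ?_
    simp only [Pi.div_apply, Pi.pow_apply, Function.comp_apply]
    rw [Nat.centralBinom_eq_two_mul_choose, Nat.cast_choose ℝ (by lia : n ≤ 2 * n),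
      show 2 * n - n = n by lia, sq]
  · filter_upwards [eventually_gt_atTop 0] with n hn
    have hsqrt : √(2 * ((2 * n : ℕ) : ℝ) * π) = 2 * √(π * n) := by
      rw [show 2 * ((2 * n : ℕ) : ℝ) * π = 2 ^ 2 * (π * n) by push_cast; ring,
        sqrt_mul (by positivity), sqrt_sq two_pos.le]
    have hsq : √(2 * (n : ℝ) * π) ^ 2 = 2 * √(π * n) ^ 2 := by
      rw [sq_sqrt (by positivity), sq_sqrt (by positivity)]; ring
    have hpow : (((2 * n : ℕ) : ℝ) / exp 1) ^ (2 * n) = 4 ^ n * ((n / exp 1) ^ n) ^ 2 := by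
      rw [Nat.cast_mul, mul_div_assoc, mul_pow, pow_mul, pow_mul', Nat.cast_ofNat]
      norm_num
    simp only [Pi.div_apply, Pi.pow_apply, Function.comp_apply]
    rw [hsqrt, hpow, mul_pow, hsq]
    field_simp

/-- The factor `(4k - 3)! / ((2k - 2)!² 16 ^ k)` of the critical weight at boundary length
`m = 2k`, which does not depend on the number of triangles. -/
noncomputable def boundaryFactor (k : ℕ) : ℝ :=
  (4 * k - 3).factorial / (2 * k - 2).factorial ^ 2 / 16 ^ k

lemma boundaryFactor_succ (j : ℕ) :
    boundaryFactor (j + 1) = (4 * j + 1) * (2 * j).centralBinom / 16 ^ (j + 1) := by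
  rw [boundaryFactor, Nat.centralBinom_eq_two_mul_choose,
    Nat.cast_choose ℝ (by lia : 2 * j ≤ 2 * (2 * j)), show 2 * (2 * j) - 2 * j = 2 * j by lia,
    show 4 * (j + 1) - 3 = 2 * (2 * j) + 1 by lia, show 2 * (j + 1) - 2 = 2 * j by lia,
    Nat.factorial_succ]
  push_cast
  ring

lemma tendsto_boundaryFactor_div_sqrt :
    Tendsto (fun k : ℕ => boundaryFactor k / √k) atTop (𝓝 (4 * √(2 * π))⁻¹) := by
  rw [← tendsto_add_atTop_iff_nat 1]
  have hcb : (fun j : ℕ => ((2 * j).centralBinom : ℝ)) ~[atTop]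
      fun j => 4 ^ (2 * j) / √(π * (2 * j : ℕ)) :=
    centralBinom_isEquivalent.comp_tendsto (tendsto_id.const_mul_atTop' two_pos)
  have hequiv := (((IsEquivalent.refl (u := fun j : ℕ => 4 * (j : ℝ) + 1)).mul hcb).div
    (IsEquivalent.refl (u := fun j : ℕ => (16 : ℝ) ^ (j + 1)))).div
    (IsEquivalent.refl (u := fun j : ℕ => √((j + 1 : ℕ) : ℝ)))
  have hlim : Tendsto (fun j : ℕ => (16 * √(2 * π))⁻¹ * (4 + (j : ℝ)⁻¹) * √(j / (j + 1)))
      atTop (𝓝 ((16 * √(2 * π))⁻¹ * (4 + 0) * √1)) :=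
    ((tendsto_inv_atTop_nhds_zero_nat.const_add 4).const_mul _).mul
      (tendsto_natCast_div_add_atTop (1 : ℝ)).sqrt
  rw [sqrt_one, show (16 * √(2 * π))⁻¹ * (4 + 0) * 1 = (4 * √(2 * π))⁻¹ by field_simp; norm_num]
    at hlim
  refine (hequiv.tendsto_nhds_iff.2 (hlim.congr' ?_)).congr fun j => ?_
  · filter_upwards [eventually_gt_atTop 0] with j hj
    have hsqrt : √(π * (2 * j : ℕ)) = √(2 * π) * √j := by
      rw [← sqrt_mul (by positivity)]; push_cast; ring_nf
    simp only [Pi.div_apply, Pi.mul_apply]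
    rw [hsqrt, sqrt_div (by positivity), Nat.cast_succ, pow_mul, pow_succ (16 : ℝ),
      show (4 : ℝ) ^ 2 = 16 by norm_num]
    field_simp
    rw [sq_sqrt (by positivity)]
  · simp only [Pi.div_apply, Pi.mul_apply, boundaryFactor_succ]

lemma exists_abs_boundaryFactor_le_mul_sqrt :
    ∃ C, ∀ k ≠ 0, |boundaryFactor k| ≤ C * √k := by
  obtain ⟨C, hC⟩ := tendsto_boundaryFactor_div_sqrt.abs.bddAbove_range
  refine ⟨C, fun k hk => ?_⟩
  have hsqrt : 0 < √(k : ℝ) := sqrt_pos.2 (by positivity)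
  have h : |boundaryFactor k / √k| ≤ C := hC (mem_range_self k)
  rwa [abs_div, abs_of_pos hsqrt, div_le_iff₀ hsqrt] at h

end BoundaryFactor

section BulkFactor

/-- The factor of the critical weight at `N = 2n`, `m = 2k` that depends on both `n` and `k`,
normalized to be `1` at `k = 0`. -/
noncomputable def bulkFactor (n k : ℕ) : ℝ :=
  affineProd (1 / 3) 0 n k * affineProd (-1) 1 n k /
    (affineProd 1 (1 / 2) n k * affineProd 1 1 n k)

lemma factorial_three_mul_add_sub_one {n : ℕ} (hn : n ≠ 0) (k : ℕ) :
    ((3 * n + k - 1).factorial : ℝ) =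
      (3 * n - 1).factorial * (3 * n) ^ k * affineProd (1 / 3) 0 n k := by
  induction k with
  | zero => simp [affineProd]
  | succ k ih =>
    have hcast : ((3 * n + k - 1 : ℕ) : ℝ) + 1 = 3 * n + k := by
      rw [← Nat.cast_add_one, Nat.sub_add_cancel (by lia)]; push_cast; ring
    rw [show 3 * n + (k + 1) - 1 = 3 * n + k - 1 + 1 by lia, Nat.factorial_succ, Nat.cast_mul,
      ih, Nat.cast_add_one, hcast, affineProd_succ]
    field_simp
    ring

lemma factorial_succ_eq_mul_affineProd {n k : ℕ} (hn : n ≠ 0) (hk : k ≤ n + 1) :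
    ((n + 1).factorial : ℝ) = (n + 1 - k).factorial * n ^ k * affineProd (-1) 1 n k := by
  induction k with
  | zero => simp [affineProd]
  | succ k ih =>
    have hcast : ((n + 1 - (k + 1) : ℕ) : ℝ) + 1 = n + 1 - k := by
      rw [Nat.cast_sub hk]; push_cast; ring
    rw [ih (by lia), show n + 1 - k = n + 1 - (k + 1) + 1 by lia, Nat.factorial_succ,
      Nat.cast_mul, Nat.cast_add_one, hcast, affineProd_succ]
    field_simp
    ring

lemma factorial_two_mul_add_two_mul {n : ℕ} (hn : n ≠ 0) (k : ℕ) :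
    ((2 * n + 2 * k).factorial : ℝ) = (2 * n).factorial * (4 * n ^ 2) ^ k *
      (affineProd 1 (1 / 2) n k * affineProd 1 1 n k) := by
  induction k with
  | zero => simp [affineProd]
  | succ k ih =>
    rw [show 2 * n + 2 * (k + 1) = 2 * n + 2 * k + 1 + 1 by ring, Nat.factorial_succ,
      Nat.factorial_succ, Nat.cast_mul, Nat.cast_mul, ih, affineProd_succ, affineProd_succ]
    push_cast
    field_simp
    ring

/-- The part of the critical weight `w (log 6) (2n) (2k)` that does not depend on `k`. -/
noncomputable def criticalPrefactor (n : ℕ) : ℝ :=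
  2 ^ (n + 2) * (3 * n - 1).factorial / ((n + 1).factorial * (2 * n).factorial)

lemma criticalPrefactor_pos (n : ℕ) : 0 < criticalPrefactor n := by
  rw [criticalPrefactor]; positivity

lemma exp_neg_log_six_mul (k : ℕ) : exp (-log 6 * (2 * k : ℕ) / 2) = (1 / 6) ^ k := by
  rw [show -log 6 * (2 * k : ℕ) / 2 = k * log (1 / 6) by rw [one_div, log_inv]; push_cast; ring,
    exp_nat_mul, exp_log (by norm_num)]

theorem critical_w_eq {n k : ℕ} (hn : n ≠ 0) (hk : k ≤ n) :
    w (log 6) (2 * n) (2 * k) = criticalPrefactor n * (boundaryFactor k * bulkFactor n k) := by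
  have hC0 : C0 (2 * n) (2 * k) = 2 ^ (n - k + 2) * (3 * n + k - 1).factorial *
      (4 * k - 3).factorial / ((n + 1 - k).factorial * (2 * n + 2 * k).factorial *
        (2 * k - 2).factorial ^ 2) := by
    rw [C0, show (2 * n - 2 * k) / 2 = n - k by lia,
      show 2 * (2 * k) + 3 * (n - k) - 1 = 3 * n + k - 1 by lia,
      show 2 * (2 * k) - 3 = 4 * k - 3 by lia, show n - k + 1 = n + 1 - k by lia,
      show 2 * (2 * k) + 2 * (n - k) = 2 * n + 2 * k by lia]
  have hpow : (2 : ℝ) ^ (n + 2) = 2 ^ (n - k + 2) * 2 ^ k := by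
    rw [← pow_add]; congr 1; lia
  have hbase : (1 / 6 : ℝ) ^ k * (3 * n) ^ k * n ^ k * 16 ^ k = 2 ^ k * (4 * n ^ 2) ^ k := by
    simp only [← mul_pow]; ring
  have hfact := factorial_succ_eq_mul_affineProd hn (hk.trans n.le_succ)
  have hfall : affineProd (-1) 1 n k ≠ 0 := fun h => by simp [h, Nat.factorial_ne_zero] at hfact
  have hhalf := affineProd_pos zero_le_one (by norm_num : (0 : ℝ) ≤ 1 / 2) n.cast_nonneg k
  have hone := affineProd_pos zero_le_one zero_le_one (n.cast_nonneg (α := ℝ)) k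
  rw [w, exp_neg_log_six_mul, hC0, criticalPrefactor, boundaryFactor, bulkFactor, hfact,
    factorial_three_mul_add_sub_one hn, factorial_two_mul_add_two_mul hn, hpow]
  field_simp
  linear_combination affineProd (1 / 3) 0 n k * hbase

lemma tendsto_bulkFactor {k : ℕ → ℕ} {L : ℝ}
    (hk : Tendsto (fun n => (k n : ℝ) ^ 2 / n) atTop (𝓝 L)) :
    Tendsto (fun n => bulkFactor n (k n)) atTop (𝓝 (exp (-(4 / 3) * L))) := by
  have h (α β : ℝ) := tendsto_affineProd α β tendsto_natCast_atTop_atTop hk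
  have hexp : exp (-(4 / 3) * L) = exp (1 / 3 * L / 2) * exp (-1 * L / 2) /
      (exp (1 * L / 2) * exp (1 * L / 2)) := by
    rw [← exp_add, ← exp_add, ← exp_sub]
    ring_nf
  rw [hexp]
  exact ((h (1 / 3) 0).mul (h (-1) 1)).div ((h 1 (1 / 2)).mul (h 1 1)) (by positivity)

lemma one_add_neg_add_one_div_nonneg {n i : ℕ} (hi : i ≤ n) :
    (0 : ℝ) ≤ 1 + (-1 * i + 1) / n := by
  have hle : (i : ℝ) / n ≤ 1 := div_le_one_of_le₀ (by exact_mod_cast hi) n.cast_nonneg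
  have hinv : (0 : ℝ) ≤ (n : ℝ)⁻¹ := by positivity
  calc (0 : ℝ) ≤ 1 - i / n + (n : ℝ)⁻¹ := by linarith
    _ = 1 + (-1 * i + 1) / n := by ring

lemma affineProd_neg_one_one_nonneg {n k : ℕ} (hk : k ≤ n) : 0 ≤ affineProd (-1) 1 n k :=
  Finset.prod_nonneg fun _ hi =>
    one_add_neg_add_one_div_nonneg ((Finset.mem_range.1 hi).le.trans hk)

lemma bulkFactor_nonneg {n k : ℕ} (hk : k ≤ n) : 0 ≤ bulkFactor n k :=
  div_nonneg
    (mul_nonneg (affineProd_pos (by norm_num) le_rfl n.cast_nonneg k).le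
      (affineProd_neg_one_one_nonneg hk))
    (mul_pos (affineProd_pos zero_le_one (by norm_num) n.cast_nonneg k)
      (affineProd_pos zero_le_one zero_le_one n.cast_nonneg k)).le

lemma bulkFactor_le_affineProd {n k : ℕ} (hk : k ≤ n) :
    bulkFactor n k ≤ affineProd (-1) 1 n k := by
  have hn : (0 : ℝ) ≤ n := n.cast_nonneg
  have hhalf := one_le_affineProd zero_le_one (by norm_num : (0 : ℝ) ≤ 1 / 2) hn k
  have hone := affineProd_pos zero_le_one zero_le_one hn k
  have hnum : affineProd (1 / 3) 0 n k ≤ affineProd 1 (1 / 2) n k * affineProd 1 1 n k :=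
    calc affineProd (1 / 3) 0 n k ≤ affineProd 1 1 n k :=
          affineProd_le_affineProd (by norm_num) le_rfl hn (by norm_num) zero_le_one k
      _ ≤ _ := le_mul_of_one_le_left hone.le hhalf
  rw [bulkFactor, mul_comm, div_le_iff₀ (by positivity)]
  exact mul_le_mul_of_nonneg_left hnum (affineProd_neg_one_one_nonneg hk)

lemma bulkFactor_le_exp {n k : ℕ} (hk : k ≤ n) :
    bulkFactor n k ≤ exp (3 / 2 - k ^ 2 / (2 * n)) := by
  have hle : (k : ℝ) / n ≤ 1 := div_le_one_of_le₀ (by exact_mod_cast hk) n.cast_nonneg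
  calc bulkFactor n k ≤ affineProd (-1) 1 n k := bulkFactor_le_affineProd hk
    _ ≤ exp ((-1 * (k * (k - 1) / 2) + 1 * k) / n) :=
      affineProd_le_exp fun i hi => one_add_neg_add_one_div_nonneg (hi.le.trans hk)
    _ = exp (3 / 2 * (k / n) - k ^ 2 / (2 * n)) := by ring_nf
    _ ≤ exp (3 / 2 - k ^ 2 / (2 * n)) := by gcongr; linarith

end BulkFactor

section ScalingLimit

/-- The density `√x exp (-2x²/3)`, not normalized, of the limit law of `m / √N`. -/
noncomputable def criticalDensity (x : ℝ) : ℝ := √x * exp (-2 * x ^ 2 / 3)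

lemma integral_criticalDensity_pos : 0 < ∫ x in Ioi (0 : ℝ), criticalDensity x := by
  have hrpow : ∀ x : ℝ,
      criticalDensity x = x ^ (1 / 2 : ℝ) * exp (-(2 / 3) * x ^ (2 : ℝ)) := fun x => by
    rw [criticalDensity, sqrt_eq_rpow, rpow_two]
    ring_nf
  simp only [hrpow]
  rw [integral_rpow_mul_exp_neg_mul_rpow two_pos (by norm_num) (by norm_num)]
  exact mul_pos (by positivity) (Gamma_pos_of_pos (by norm_num))

/-- The scale of `k = m / 2`: for `N = 2n` one has `m / √N = k / √(n / 2)`. -/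
noncomputable def boundaryScale (n : ℕ) : ℝ := √(n / 2)

lemma boundaryScale_sq (n : ℕ) : boundaryScale n ^ 2 = n / 2 := sq_sqrt (by positivity)

lemma tendsto_boundaryScale_atTop : Tendsto boundaryScale atTop atTop :=
  tendsto_sqrt_atTop.comp (tendsto_natCast_atTop_atTop.atTop_div_const two_pos)

lemma sqrt_two_mul_eq_boundaryScale (n : ℕ) : √((2 * n : ℕ) : ℝ) = 2 * boundaryScale n := by
  rw [boundaryScale, show ((2 * n : ℕ) : ℝ) = 2 ^ 2 * (n / 2) by push_cast; ring,
    sqrt_mul (by positivity), sqrt_sq two_pos.le]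

/-- The critical weight at `N = 2n`, `m = 2k` divided by its order of magnitude when `k` is of
order `boundaryScale n`, and extended by `0` to `k > n`. -/
noncomputable def rescaledWeight (n k : ℕ) : ℝ :=
  if k ≤ n then boundaryFactor k * bulkFactor n k / √(boundaryScale n) else 0

lemma natCeil_boundaryScale_mul_le {n : ℕ} {x : ℝ} (hx : x ≤ 2 * boundaryScale n) :
    ⌈boundaryScale n * x⌉₊ ≤ n := by
  refine Nat.ceil_le.2 ?_
  calc boundaryScale n * x ≤ boundaryScale n * (2 * boundaryScale n) :=
        mul_le_mul_of_nonneg_left hx (sqrt_nonneg _)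
    _ = 2 * boundaryScale n ^ 2 := by ring
    _ = n := by rw [boundaryScale_sq]; ring

lemma tendsto_natCeil_boundaryScale_mul_div {x : ℝ} (hx : 0 ≤ x) :
    Tendsto (fun n => (⌈boundaryScale n * x⌉₊ : ℝ) / boundaryScale n) atTop (𝓝 x) := by
  simpa only [Function.comp_def, mul_comm x] using
    (tendsto_nat_ceil_mul_div_atTop hx).comp tendsto_boundaryScale_atTop

lemma tendsto_rescaledWeight {x : ℝ} (hx : 0 < x) :
    Tendsto (fun n => rescaledWeight n ⌈boundaryScale n * x⌉₊) atTop
      (𝓝 ((4 * √(2 * π))⁻¹ * criticalDensity x)) := by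
  have hratio := tendsto_natCeil_boundaryScale_mul_div hx.le
  have hceil : Tendsto (fun n => ⌈boundaryScale n * x⌉₊) atTop atTop :=
    tendsto_nat_ceil_atTop.comp (tendsto_boundaryScale_atTop.atTop_mul_const hx)
  have hbulk : Tendsto (fun n => bulkFactor n ⌈boundaryScale n * x⌉₊) atTop
      (𝓝 (exp (-(4 / 3) * (x ^ 2 / 2)))) := by
    refine tendsto_bulkFactor (((hratio.pow 2).div_const 2).congr fun n => ?_)
    rw [div_pow, boundaryScale_sq]
    ring
  have hprod := ((tendsto_boundaryFactor_div_sqrt.comp hceil).mul hratio.sqrt).mul hbulk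
  rw [mul_assoc, show -(4 / 3) * (x ^ 2 / 2) = -2 * x ^ 2 / 3 by ring] at hprod
  refine hprod.congr' ?_
  filter_upwards [tendsto_boundaryScale_atTop.eventually_ge_atTop (x / 2),
    hceil.eventually_gt_atTop 0] with n hxn hpos
  rw [rescaledWeight, if_pos (natCeil_boundaryScale_mul_le (by linarith)),
    sqrt_div (Nat.cast_nonneg _), Function.comp_apply]
  field_simp

lemma sqrt_natCeil_mul_div_sqrt_le {s x : ℝ} (hs : 1 ≤ s) (hx : 0 ≤ x) :
    √⌈s * x⌉₊ / √s ≤ x + 1 := by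
  have hceil : (⌈s * x⌉₊ : ℝ) ≤ s * x + 1 := (Nat.ceil_lt_add_one (by positivity)).le
  have hdiv : (⌈s * x⌉₊ : ℝ) / s ≤ x + 1 := by
    rw [div_le_iff₀ (by positivity)]; linarith
  rw [← sqrt_div (Nat.cast_nonneg _)]
  exact sqrt_le_iff.2 ⟨by positivity, hdiv.trans (by nlinarith)⟩

lemma bulkFactor_natCeil_le {n : ℕ} {x : ℝ} (hn : n ≠ 0) (hx : 0 ≤ x)
    (hk : ⌈boundaryScale n * x⌉₊ ≤ n) :
    bulkFactor n ⌈boundaryScale n * x⌉₊ ≤ exp (3 / 2) * exp (-(1 / 4) * x ^ 2) := by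
  have hsq : n / 2 * x ^ 2 ≤ (⌈boundaryScale n * x⌉₊ : ℝ) ^ 2 := by
    rw [← boundaryScale_sq, ← mul_pow]
    exact pow_le_pow_left₀ (mul_nonneg (sqrt_nonneg _) hx) (Nat.le_ceil _) 2
  have hexp : 1 / 4 * x ^ 2 ≤ (⌈boundaryScale n * x⌉₊ : ℝ) ^ 2 / (2 * n) := by
    rw [le_div_iff₀ (by positivity)]; linarith
  calc _ ≤ exp (3 / 2 - (⌈boundaryScale n * x⌉₊ : ℝ) ^ 2 / (2 * n)) := bulkFactor_le_exp hk
    _ ≤ exp (3 / 2 + -(1 / 4) * x ^ 2) := exp_le_exp.2 (by linarith)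
    _ = _ := exp_add _ _

lemma exists_abs_rescaledWeight_le :
    ∃ C, ∀ᶠ n in atTop, ∀ x > 0, |rescaledWeight n ⌈boundaryScale n * x⌉₊| ≤
      C * ((x + 1) * exp (-(1 / 4) * x ^ 2)) := by
  obtain ⟨C, hC⟩ := exists_abs_boundaryFactor_le_mul_sqrt
  have hC0 : 0 ≤ C := by simpa using (abs_nonneg _).trans (hC 1 one_ne_zero)
  refine ⟨C * exp (3 / 2), ?_⟩
  filter_upwards [tendsto_boundaryScale_atTop.eventually_ge_atTop 1, eventually_ne_atTop 0]
    with n hs hn x hx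
  rw [rescaledWeight]
  split_ifs with hk
  swap
  · rw [abs_zero]; positivity
  have hpos : ⌈boundaryScale n * x⌉₊ ≠ 0 := (Nat.ceil_pos.2 (by positivity)).ne'
  rw [abs_div, abs_mul, abs_of_nonneg (bulkFactor_nonneg hk), abs_of_nonneg (sqrt_nonneg _)]
  calc _ ≤ C * √⌈boundaryScale n * x⌉₊ * (exp (3 / 2) * exp (-(1 / 4) * x ^ 2)) /
        √(boundaryScale n) := by
        gcongr
        · exact bulkFactor_nonneg hk
        · exact hC _ hpos
        · exact bulkFactor_natCeil_le hn hx.le hk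
    _ = C * exp (3 / 2) * (√⌈boundaryScale n * x⌉₊ / √(boundaryScale n) *
        exp (-(1 / 4) * x ^ 2)) := by ring
    _ ≤ _ := by gcongr; exact sqrt_natCeil_mul_div_sqrt_le hs hx.le

lemma integrable_add_one_mul_exp_neg_mul_sq {b : ℝ} (hb : 0 < b) :
    Integrable fun x : ℝ => (x + 1) * exp (-b * x ^ 2) := by
  simp only [add_mul, one_mul]
  exact (integrable_mul_exp_neg_mul_sq hb).add (integrable_exp_neg_mul_sq hb)

theorem tendsto_sum_mul_rescaledWeight {φ : ℝ → ℝ} {M : ℝ} (hM : ∀ x, |φ x| ≤ M)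
    (hφ : ∀ᵐ x ∂volume.restrict (Ioi 0), ContinuousAt φ x) :
    Tendsto (fun n => (boundaryScale n)⁻¹ *
        ∑ k ∈ Finset.range n, φ ((k + 1 : ℕ) / boundaryScale n) * rescaledWeight n (k + 1))
      atTop (𝓝 ((4 * √(2 * π))⁻¹ * ∫ x in Ioi 0, φ x * criticalDensity x)) := by
  obtain ⟨C, hC⟩ := exists_abs_rescaledWeight_le
  have hdom : ∀ᶠ n in atTop, ∀ x > 0, ‖φ (⌈boundaryScale n * x⌉₊ / boundaryScale n) *
      rescaledWeight n ⌈boundaryScale n * x⌉₊‖ ≤ M * (C * ((x + 1) * exp (-(1 / 4) * x ^ 2))) :=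
    hC.mono fun n hn x hx => (norm_mul_le _ _).trans <|
      mul_le_mul (hM _) (hn x hx) (abs_nonneg _) ((abs_nonneg _).trans (hM 0))
  have hlim : ∀ᵐ x ∂volume.restrict (Ioi 0),
      Tendsto (fun n => φ (⌈boundaryScale n * x⌉₊ / boundaryScale n) *
        rescaledWeight n ⌈boundaryScale n * x⌉₊) atTop
        (𝓝 ((4 * √(2 * π))⁻¹ * (φ x * criticalDensity x))) := by
    filter_upwards [hφ, ae_restrict_mem measurableSet_Ioi] with x hφx hx
    rw [mul_left_comm]
    exact (hφx.tendsto.comp (tendsto_natCeil_boundaryScale_mul_div (le_of_lt hx))).mul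
      (tendsto_rescaledWeight hx)
  have hbound := ((integrable_add_one_mul_exp_neg_mul_sq (b := 1 / 4) (by norm_num)).const_mul
    C).const_mul M
  rw [← integral_const_mul]
  refine (tendsto_inv_smul_tsum_of_dominated (tendsto_boundaryScale_atTop.eventually_gt_atTop 0)
    hbound.integrableOn (F := fun n k => φ (k / boundaryScale n) * rescaledWeight n k)
    hdom hlim).congr fun n => ?_
  rw [smul_eq_mul, tsum_eq_sum fun k hk => ?_]
  rw [rescaledWeight, if_neg (by simpa using hk), mul_zero]

end ScalingLimit

section LimitLaw

lemma evenAtTop_eq_map : evenAtTop = map (2 * ·) atTop := by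
  have hcomap : comap (fun n : ℕ => 2 * n) atTop = atTop :=
    comap_embedding_atTop (fun _ _ => by lia) fun n => ⟨n, by lia⟩
  rw [evenAtTop, ← range_two_mul, ← map_comap, hcomap]

lemma sum_filter_even_two_le {M : Type*} [AddCommMonoid M] (f : ℕ → M) (n : ℕ) :
    ∑ m ∈ Finset.range (2 * n + 1) with Even m ∧ 2 ≤ m, f m =
      ∑ k ∈ Finset.range n, f (2 * (k + 1)) := by
  rw [Finset.sum_filter]
  induction n with
  | zero => simp
  | succ n ih =>
    rw [Finset.sum_range_succ _ n, ← ih, show 2 * (n + 1) + 1 = 2 * n + 1 + 1 + 1 by ring,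
      Finset.sum_range_succ, Finset.sum_range_succ, if_neg (by grind), if_pos (by grind), add_zero]
    rfl

lemma sum_mul_critical_w {n : ℕ} (hn : n ≠ 0) (φ : ℝ → ℝ) :
    ∑ m ∈ Finset.range (2 * n + 1) with Even m ∧ 2 ≤ m,
        φ (m / √(2 * n : ℕ)) * w (log 6) (2 * n) m =
      criticalPrefactor n * √(boundaryScale n) * boundaryScale n * ((boundaryScale n)⁻¹ *
        ∑ k ∈ Finset.range n, φ ((k + 1 : ℕ) / boundaryScale n) * rescaledWeight n (k + 1)) := by
  have hs : 0 < boundaryScale n := sqrt_pos.2 (by positivity)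
  rw [sum_filter_even_two_le, mul_assoc _ (boundaryScale n), mul_inv_cancel_left₀ hs.ne',
    Finset.mul_sum]
  refine Finset.sum_congr rfl fun k hk => ?_
  have hkn : k + 1 ≤ n := Finset.mem_range.1 hk
  rw [critical_w_eq hn hkn, sqrt_two_mul_eq_boundaryScale, Nat.cast_mul, Nat.cast_ofNat,
    mul_div_mul_left _ _ two_ne_zero, rescaledWeight, if_pos hkn]
  field_simp

theorem critical_limit_law_general {φ : ℝ → ℝ} {M : ℝ} (hM : ∀ x, |φ x| ≤ M)
    (hφ : ∀ᵐ x ∂volume.restrict (Ioi 0), ContinuousAt φ x) :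
    Tendsto (fun N : ℕ => ∑ m ∈ Finset.range (N + 1) with Even m ∧ 2 ≤ m,
        φ (m / √N) * P (log 6) N m)
      evenAtTop
      (𝓝 ((∫ x in Ioi 0, φ x * criticalDensity x) / ∫ x in Ioi 0, criticalDensity x)) := by
  rw [evenAtTop_eq_map, tendsto_map'_iff]
  have hc : (4 * √(2 * π))⁻¹ ≠ 0 := by positivity
  have hnum := tendsto_sum_mul_rescaledWeight hM hφ
  have hden := tendsto_sum_mul_rescaledWeight (φ := 1) (M := 1) (by simp)
    (.of_forall fun _ => continuousAt_const)
  simp only [Pi.one_apply, one_mul] at hden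
  have hdiv := hnum.div hden (mul_ne_zero hc integral_criticalDensity_pos.ne')
  rw [mul_div_mul_left _ _ hc] at hdiv
  refine hdiv.congr' ?_
  filter_upwards [eventually_ne_atTop 0] with n hn
  have hs : 0 < boundaryScale n := sqrt_pos.2 (by positivity)
  have hΘ := sum_mul_critical_w hn 1
  simp only [Pi.one_apply, one_mul] at hΘ
  simp only [Function.comp_apply, P, Θ, mul_div_assoc', ← Finset.sum_div]
  rw [sum_mul_critical_w hn φ, hΘ, mul_div_mul_left _ _
    (by have := criticalPrefactor_pos n; positivity)]
  rfl

lemma integral_Ioi_indicator_Icc_mul {a b : ℝ} (ha : 0 ≤ a) (hab : a ≤ b) (f : ℝ → ℝ) :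
    ∫ x in Ioi 0, (Icc a b).indicator 1 x * f x = ∫ x in a..b, f x := by
  have hsub : Ioc a b ⊆ Ioi 0 := fun x hx => ha.trans_lt hx.1
  have hae : (Icc a b ∩ Ioi 0 : Set ℝ) =ᵐ[volume] Ioc a b := by
    rw [← inter_eq_left.2 hsub]
    exact Ioc_ae_eq_Icc.symm.inter (ae_eq_refl _)
  simp only [← indicator_mul_left, Pi.one_apply, one_mul]
  rw [integral_indicator measurableSet_Icc, Measure.restrict_restrict measurableSet_Icc,
    setIntegral_congr_set hae, intervalIntegral.integral_of_le hab]

lemma ae_continuousAt_indicator_Icc {a b : ℝ} (hab : a ≤ b) :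
    ∀ᵐ x : ℝ, ContinuousAt ((Icc a b).indicator (1 : ℝ → ℝ)) x := by
  filter_upwards [Measure.ae_ne volume a, Measure.ae_ne volume b] with x hxa hxb
  refine continuous_one.continuousOn.continuousAt_indicator ?_
  simp [frontier_Icc hab, hxa, hxb]

lemma abs_indicator_one_le_one {α : Type*} (s : Set α) (x : α) :
    |s.indicator (1 : α → ℝ) x| ≤ 1 := by
  by_cases hx : x ∈ s <;> simp [hx]

lemma sum_filter_eq_sum_indicator_mul (a b : ℝ) (N : ℕ) (f : ℕ → ℝ) :
    ∑ m ∈ (Finset.range (N + 1)).filter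
        (fun m : ℕ => Even m ∧ 2 ≤ m ∧ a * √N ≤ (m : ℝ) ∧ (m : ℝ) ≤ b * √N), f m =
      ∑ m ∈ Finset.range (N + 1) with Even m ∧ 2 ≤ m,
        (Icc a b).indicator 1 ((m : ℝ) / √N) * f m := by
  rw [Finset.sum_filter, Finset.sum_filter]
  refine Finset.sum_congr rfl fun m hm => ?_
  by_cases hm' : Even m ∧ 2 ≤ m
  · have hN : 0 < √(N : ℝ) := sqrt_pos.2 (by have := Finset.mem_range.1 hm; norm_cast; lia)
    simp [hm', indicator_apply, le_div_iff₀ hN, div_le_iff₀ hN]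
  · rw [if_neg hm', if_neg fun h => hm' ⟨h.1, h.2.1⟩]

end LimitLaw

/-- Critical limit law: at μ₁ = log 6, m(N)/√N converges in distribution to the law on
(0,∞) with density proportional to √x exp(-2x²/3). -/
theorem critical_limit_law (a b : ℝ) (ha : 0 ≤ a) (hab : a < b) :
    Filter.Tendsto
      (fun N : ℕ =>
        ∑ m ∈ (Finset.range (N + 1)).filter
            (fun m : ℕ => Even m ∧ 2 ≤ m ∧
              a * Real.sqrt N ≤ (m : ℝ) ∧ (m : ℝ) ≤ b * Real.sqrt N),
          P (Real.log 6) N m)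
      evenAtTop
      (nhds ((∫ x in a..b, Real.sqrt x * Real.exp (-2 * x ^ 2 / 3)) /
        (∫ x in Set.Ioi (0 : ℝ), Real.sqrt x * Real.exp (-2 * x ^ 2 / 3)))) := by
  simpa only [sum_filter_eq_sum_indicator_mul, integral_Ioi_indicator_Icc_mul ha hab.le,
      criticalDensity] using
    critical_limit_law_general (abs_indicator_one_le_one (Icc a b))
      (ae_restrict_of_ae (ae_continuousAt_indicator_Icc hab.le))
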